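/- arXiv:2503.17387 — 2 statements merged into one kernel-verified Lean document; each statement's English description precedes it below -/
import Mathlib

section
/- Every deterministic graphical game that is terminal, has at most 3 terminals, and in which some terminal can be reached from the initial position v₀ by a directed path, has a terminal Nash equilibrium, i.e., a Nash equilibrium σ with g(σ) ∈ T. -/
open Classical

/-- A deterministic graphical (DG) game on vertex (position) set `V` with player set `ι`.
`adj` is the move relation of the digraph; terminals are exactly the vertices of
out-degree `0`.  `owner x` is the player controlling position `x` (irrelevant for
terminals), `init` is the initial position, and `pref i x y` means that player `i`
strictly prefers outcome `x` to outcome `y`, where outcomes are encoded as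
`Option V`: `some t` for a terminal `t` and `none` for the infinite outcome `∞`. -/
structure DGGame (V : Type*) (ι : Type*) where
  adj : V → V → Prop
  owner : V → ι
  init : V
  pref : ι → Option V → Option V → Prop

namespace DGGame

variable {V ι : Type*} (Γ : DGGame V ι)

/-- A terminal position: no outgoing moves. -/
def Terminal (x : V) : Prop := ∀ y, ¬ Γ.adj x y

/-- The set of outcomes `A = T ∪ {∞}`. -/
def OutcomeSet : Set (Option V) := {x | x = none ∨ ∃ t, Γ.Terminal t ∧ x = some t}

/-- The preferences of each player form a strict linear order on the outcome set. -/
def PrefOrder : Prop :=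
  ∀ i : ι,
    (∀ x ∈ Γ.OutcomeSet, ¬ Γ.pref i x x) ∧
    (∀ x ∈ Γ.OutcomeSet, ∀ y ∈ Γ.OutcomeSet, ∀ z ∈ Γ.OutcomeSet,
        Γ.pref i x y → Γ.pref i y z → Γ.pref i x z) ∧
    (∀ x ∈ Γ.OutcomeSet, ∀ y ∈ Γ.OutcomeSet, x ≠ y → Γ.pref i x y ∨ Γ.pref i y x)

/-- One step of the play determined by a situation `σ` (stays put at terminals). -/
noncomputable def step (σ : V → V) (x : V) : V :=
  if Γ.Terminal x then x else σ x

/-- The position reached after `n` moves of the play starting at the initial position. -/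
noncomputable def iter (σ : V → V) (n : ℕ) : V := (Γ.step σ)^[n] Γ.init

/-- The outcome `g(σ)` of a situation: the terminal at which the play from the initial
position ends, or `none` (i.e. `∞`) if the play is infinite. -/
noncomputable def outcome (σ : V → V) : Option V :=
  if h : ∃ n, Γ.Terminal (Γ.iter σ n) then some (Γ.iter σ (Nat.find h)) else none

/-- A situation: a choice, for every non-terminal position, of a move from it.
(Values at terminal positions are irrelevant.) -/
def IsSituation (σ : V → V) : Prop := ∀ x, ¬ Γ.Terminal x → Γ.adj x (σ x)

/-- Nash equilibrium in pure stationary strategies: no player `i` can obtain a strictly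
better outcome by changing his own moves only. -/
def IsNE (σ : V → V) : Prop :=
  Γ.IsSituation σ ∧
  ∀ (i : ι) (σ' : V → V), Γ.IsSituation σ' →
    (∀ x, Γ.owner x ≠ i → σ' x = σ x) →
    ¬ Γ.pref i (Γ.outcome σ') (Γ.outcome σ)

/-- A terminal Nash equilibrium: a NE whose outcome is a terminal. -/
def IsTerminalNE (σ : V → V) : Prop := Γ.IsNE σ ∧ ∃ t, Γ.outcome σ = some t

/-- A non-terminal Nash equilibrium: a NE whose outcome is `∞`. -/
def IsNonterminalNE (σ : V → V) : Prop := Γ.IsNE σ ∧ Γ.outcome σ = none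

/-- A terminal DG game: every player prefers every terminal outcome to `∞`. -/
def TerminalGame : Prop := ∀ (i : ι) (t : V), Γ.Terminal t → Γ.pref i (some t) none

/-- A play-once DG game: every player controls exactly one position. -/
def PlayOnce : Prop := ∀ i : ι, {x | ¬ Γ.Terminal x ∧ Γ.owner x = i}.ncard = 1

/-- Reachability by a directed path. -/
def Reaches (x y : V) : Prop := Relation.ReflTransGen Γ.adj x y

end DGGame

/-!
Backward induction assigns outcomes to some positions: to one from which the owner can move to his
best outcome, and to one all of whose moves already have outcomes. Declaring these positions
terminal changes nothing essential, and afterwards every remaining position has a move to a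
remaining one, and none has a move to the best label of its owner.

Let `A x` be the set of positions from which the players for whom `x` is worst can jointly force
the play to end at a label other than `x`. Suppose that some `x` is reachable from the initial
position by a path outside `A x`. Let everybody follow such a path, keep the play outside `A x`
wherever possible, and enter no terminal with a label other than `x`. This is an equilibrium:
players for whom `x` is worst cannot enter `A x`, and any other player can only reach `x` or labels
that are not his best, which are no better than `x` because there are three labels.

Such an `x` exists. The three sets `A x` have no common point, and from a point of two of them the
two coalitions together enforce the third label along a path on which it cannot be averted. Now
trace a path to a terminal backwards, starting with the label of that terminal as `x`. This `x`
remains reachable outside `A x` until the path meets `A x`. From a point of `A x`, follow the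
attractor to a terminal with a label `z` other than `x` and trace this path backwards in turn: where
it meets `A z`, it is in both `A x` and `A z`, so that `z` can be replaced by the third label.
-/

open Relation

/-! ### Positional paths and rankings -/

/-- `ReachesIn R S n u`: some `R`-path of length `n` leads from `u` into `S`. -/
def ReachesIn {α : Type*} (R : α → α → Prop) (S : Set α) : ℕ → α → Prop
  | 0, u => u ∈ S
  | n + 1, u => ∃ v, R u v ∧ ReachesIn R S n v

theorem exists_reachesIn {α : Type*} {R : α → α → Prop} {S : Set α} {u y : α} (hy : y ∈ S)
    (h : ReflTransGen R u y) : ∃ n, ReachesIn R S n u := by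
  induction h using ReflTransGen.head_induction_on with
  | refl => exact ⟨0, hy⟩
  | head huv _ ih =>
    obtain ⟨n, hn⟩ := ih
    exact ⟨n + 1, _, huv, hn⟩

theorem exists_positional_path {α : Type*} (R : α → α → Prop) (S : Set α) :
    ∃ f : α → α, ∀ u, (∃ y ∈ S, ReflTransGen R u y) →
      ∃ y ∈ S, ReflTransGen (fun a b => R a b ∧ f a = b) u y := by
  let dist (u : α) : ℕ := sInf {n | ReachesIn R S n u}
  have exists_closer : ∀ u, (∃ n, ReachesIn R S n u) → u ∉ S →
      ∃ v, R u v ∧ (∃ n, ReachesIn R S n v) ∧ dist v < dist u := by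
    intro u hu huS
    have hmem : ReachesIn R S (dist u) u := Nat.sInf_mem hu
    cases hd : dist u with
    | zero =>
      rw [hd] at hmem
      exact absurd hmem huS
    | succ n =>
      rw [hd] at hmem
      obtain ⟨v, huv, hv⟩ := hmem
      exact ⟨v, huv, ⟨n, hv⟩, Nat.lt_succ_of_le (Nat.sInf_le hv)⟩
  choose! f hR hf hlt using exists_closer
  suffices h : ∀ u, (∃ n, ReachesIn R S n u) →
      ∃ y ∈ S, ReflTransGen (fun a b => R a b ∧ f a = b) u y from
    ⟨f, fun u ⟨y, hy, hp⟩ => h u (exists_reachesIn hy hp)⟩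
  intro u hu
  induction hn : dist u using Nat.strong_induction_on generalizing u with
  | _ n ih =>
    by_cases huS : u ∈ S
    · exact ⟨u, huS, .refl⟩
    · obtain ⟨y, hy, hp⟩ := ih _ (hn ▸ hlt u hu huS) (f u) (hf u hu huS) rfl
      exact ⟨y, hy, .head ⟨hR u hu huS, rfl⟩ hp⟩

theorem exists_embedding_nat_of_isStrictOrder {α : Type*} [Finite α] (r : α → α → Prop)
    [IsStrictOrder α r] : ∃ ρ : α ↪ ℕ, ∀ a b, r a b → ρ a < ρ b := by
  let := partialOrderOfSO r
  have : Fintype (LinearExtension α) := @Fintype.ofFinite α _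
  let φ := (Fintype.orderIsoFinOfCardEq (LinearExtension α) rfl).symm
  refine ⟨⟨fun a => φ (toLinearExtension a), fun a b h => φ.injective (Fin.ext h)⟩,
    fun a b hab => φ.strictMono (lt_of_le_of_ne (toLinearExtension.monotone (Or.inr hab)) ?_)⟩
  rintro rfl
  exact irrefl_of r _ hab

theorem isStrictOrder_map {α β : Type*} (r : α → α → Prop) [IsStrictOrder α r] (e : α ↪ β) :
    IsStrictOrder β (Relation.Map r e e) where
  irrefl := by
    rintro _ ⟨a, b, hab, rfl, h⟩
    exact irrefl_of r a (e.injective h ▸ hab)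
  trans := by
    rintro _ _ _ ⟨a, b, hab, rfl, rfl⟩ ⟨b', c, hbc, h, rfl⟩
    exact ⟨a, c, trans_of r hab (e.injective h ▸ hbc), rfl, rfl⟩

/-! ### Labelled games -/

/-- A graphical game with outcome labels in `L`: the positions carrying a label are the terminals
(moves out of them are ignored), and player `i` prefers labels of larger `rank i`, any label being
better than an infinite play. Keeping the labels apart from the graph lets a position be declared
terminal without touching its moves. -/
structure LabelledGame (V ι L : Type*) where
  adj : V → V → Prop
  lab : V → Option L
  own : V → ι
  rank : ι → L ↪ ℕ
  init : V

namespace LabelledGame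

variable {V ι L : Type*}

/-- The moves of the game. -/
def Move (G : LabelledGame V ι L) (u v : V) : Prop := G.lab u = none ∧ G.adj u v

/-- The moves made in the situation `σ`. -/
def Play (G : LabelledGame V ι L) (σ : V → V) (u v : V) : Prop := G.lab u = none ∧ σ u = v

/-- The moves possible when player `i` moves freely and everybody else follows `σ`. -/
def Dev (G : LabelledGame V ι L) (i : ι) (σ : V → V) (u v : V) : Prop :=
  G.lab u = none ∧ G.adj u v ∧ (G.own u = i ∨ σ u = v)

/-- The situation `σ` is a Nash equilibrium whose play ends at label `z`. Since infinite plays are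
worst, only the labels reachable by unilateral deviations matter. -/
structure IsTerminalNE (G : LabelledGame V ι L) (σ : V → V) (z : L) : Prop where
  adj : ∀ u, G.lab u = none → G.adj u (σ u)
  play : ∃ y, G.lab y = some z ∧ ReflTransGen (G.Play σ) G.init y
  rank_le : ∀ i y s, ReflTransGen (G.Dev i σ) G.init y → G.lab y = some s →
    G.rank i s ≤ G.rank i z

/-- Every position without a label has a move. -/
def Live (G : LabelledGame V ι L) : Prop := ∀ u, G.lab u = none → ∃ v, G.adj u v

/-- Some label is reachable from the initial position. -/
def CanEnd (G : LabelledGame V ι L) : Prop :=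
  ∃ y, G.lab y ≠ none ∧ ReflTransGen G.Move G.init y

/-- Label `s` is the best one for player `i`. -/
def IsBest (G : LabelledGame V ι L) (i : ι) (s : L) : Prop := ∀ s', G.rank i s' ≤ G.rank i s

/-- Label `s` is the worst one for player `i`. -/
def IsWorst (G : LabelledGame V ι L) (i : ι) (s : L) : Prop := ∀ s', G.rank i s ≤ G.rank i s'

variable {G : LabelledGame V ι L} {i : ι} {s s' x y z : L} {u v : V} {σ : V → V}

theorem IsBest.eq_of_rank_le (hs : G.IsBest i s) (h : G.rank i s ≤ G.rank i s') : s = s' :=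
  (G.rank i).injective (le_antisymm h (hs s'))

theorem IsWorst.eq (hx : G.IsWorst i x) (hy : G.IsWorst i y) : x = y :=
  (G.rank i).injective (le_antisymm (hx y) (hy x))

/-! ### Backward induction -/

/-- `G.Settled s u`: backward induction assigns the outcome `s` to the position `u`, either because
the owner of `u` can get his best label, or because the outcomes of all moves are known. -/
inductive Settled (G : LabelledGame V ι L) : L → V → Prop
  | terminal {u : V} {s : L} : G.lab u = some s → Settled G s u
  | best {u v : V} {s : L} : G.lab u = none → G.IsBest (G.own u) s → G.adj u v → Settled G s v →
      Settled G s u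
  | all {u v : V} {f : V → L} : G.lab u = none → (∀ v', G.adj u v' → Settled G (f v') v') →
      G.adj u v → (∀ v', G.adj u v' → G.rank (G.own u) (f v') ≤ G.rank (G.own u) (f v)) →
      Settled G (f v) u

theorem Settled.unique (h : G.Settled s u) : ∀ {s'}, G.Settled s' u → s = s' := by
  induction h with
  | terminal hs => intro s' h'; cases h' <;> simp_all
  | best hu hbest huv _ ih =>
    intro s' h'
    cases h' with
    | terminal hs => simp_all
    | best _ hbest' => exact hbest.eq_of_rank_le (hbest' _)
    | all _ hf _ hmax => exact hbest.eq_of_rank_le (ih (hf _ huv) ▸ hmax _ huv)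
  | all hu _ huv hmax ih =>
    intro s' h'
    cases h' with
    | terminal hs => simp_all
    | best _ hbest huv' h => exact (hbest.eq_of_rank_le (ih _ huv' h ▸ hmax _ huv')).symm
    | all _ hf' huv' hmax' =>
      exact (G.rank _).injective (le_antisymm (ih _ huv (hf' _ huv) ▸ hmax' _ huv)
        (ih _ huv' (hf' _ huv') ▸ hmax _ huv'))

theorem Settled.rank_le_of_adj (h : G.Settled s u) (hu : G.lab u = none) (huv : G.adj u v)
    (hs : ¬ G.IsBest (G.own u) s) :
    ∃ s', G.Settled s' v ∧ G.rank (G.own u) s' ≤ G.rank (G.own u) s := by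
  cases h with
  | terminal h => simp_all
  | best _ hbest => exact absurd hbest hs
  | all _ hf _ hmax => exact ⟨_, hf v huv, hmax v huv⟩

theorem settled_of_forall_adj [Finite L] (hlive : G.Live) (hu : G.lab u = none)
    (h : ∀ v, G.adj u v → ∃ s, G.Settled s v) : ∃ s, G.Settled s u := by
  obtain ⟨v₀, hv₀⟩ := hlive u hu
  obtain ⟨s₀, -⟩ := h v₀ hv₀
  have : Nonempty L := ⟨s₀⟩
  choose! f hf using h
  obtain ⟨_, ⟨v, huv, rfl⟩, hmax⟩ := Set.exists_max_image (f '' {v | G.adj u v})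
    (G.rank (G.own u)) (Set.toFinite _) ⟨_, v₀, hv₀, rfl⟩
  exact ⟨f v, .all hu hf huv fun v' hv' => hmax _ ⟨v', hv', rfl⟩⟩

theorem Settled.exists_path (h : G.Settled s u) :
    ∃ y, G.lab y = some s ∧
      ReflTransGen (fun a b => G.Move a b ∧ ∃ s, G.Settled s a ∧ G.Settled s b) u y := by
  induction h with
  | terminal hs => exact ⟨_, hs, .refl⟩
  | best hu hbest huv hv ih =>
    obtain ⟨y, hy, hp⟩ := ih
    exact ⟨y, hy, .head ⟨⟨hu, huv⟩, _, .best hu hbest huv hv, hv⟩ hp⟩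
  | all hu hf huv hmax ih =>
    obtain ⟨y, hy, hp⟩ := ih _ huv
    exact ⟨y, hy, .head ⟨⟨hu, huv⟩, _, .all hu hf huv hmax, hf _ huv⟩ hp⟩

theorem exists_settled_strategy (G : LabelledGame V ι L) :
    ∃ f : V → V, ∀ s u, G.Settled s u →
      (G.lab u = none → G.adj u (f u) ∧ G.Settled s (f u)) ∧
      ∃ y, G.lab y = some s ∧ ReflTransGen (G.Play f) u y := by
  obtain ⟨f, hf⟩ := exists_positional_path
    (fun a b => G.Move a b ∧ ∃ s, G.Settled s a ∧ G.Settled s b) {y | ∃ s, G.lab y = some s}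
  refine ⟨f, fun s u hu => ?_⟩
  obtain ⟨y, ⟨s', hy⟩, hp⟩ := hf u (hu.exists_path.imp fun y h => ⟨⟨s, h.1⟩, h.2⟩)
  constructor
  · intro hnone
    rcases hp.cases_head with rfl | ⟨v, ⟨⟨hmove, t, ht, htv⟩, rfl⟩, -⟩
    · simp_all
    · exact ⟨hmove.2, hu.unique ht ▸ htv⟩
  · have hy' : G.Settled s y := by
      clear hy
      induction hp with
      | refl => exact hu
      | tail _ hab ih =>
        obtain ⟨⟨-, t, hta, htb⟩, -⟩ := hab
        exact ih.unique hta ▸ htb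
    refine ⟨y, ?_, ReflTransGen.mono (fun a b h => ⟨h.1.1.1, h.2⟩) _ _ hp⟩
    rw [hy, hy'.unique (.terminal hy)]

/-- The game in which every settled position is a terminal carrying its outcome. -/
noncomputable def settle (G : LabelledGame V ι L) : LabelledGame V ι L :=
  { G with lab := fun u => if h : ∃ s, G.Settled s u then some h.choose else none }

theorem settle_lab_eq_none_iff : G.settle.lab u = none ↔ ¬ ∃ s, G.Settled s u := by
  simp [settle]

theorem settle_lab_eq_some_iff : G.settle.lab u = some s ↔ G.Settled s u := by
  by_cases h : ∃ s, G.Settled s u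
  · simp only [settle, dif_pos h, Option.some.injEq]
    exact ⟨fun hs => hs ▸ h.choose_spec, fun hs => h.choose_spec.unique hs⟩
  · simp only [settle, dif_neg h, reduceCtorEq, false_iff]
    exact fun hs => h ⟨s, hs⟩

theorem lab_eq_none_of_settle (h : G.settle.lab u = none) : G.lab u = none :=
  Option.eq_none_iff_forall_ne_some.2 fun s hs => settle_lab_eq_none_iff.1 h ⟨s, .terminal hs⟩

theorem CanEnd.settle (h : G.CanEnd) : G.settle.CanEnd := by
  obtain ⟨y, hy, hp⟩ := h
  change ∃ y', G.settle.lab y' ≠ none ∧ ReflTransGen G.settle.Move G.init y'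
  generalize G.init = v₀ at hp ⊢
  induction hp using ReflTransGen.head_induction_on with
  | refl => exact ⟨y, fun h => hy (lab_eq_none_of_settle h), .refl⟩
  | @head a b hab _ ih =>
    by_cases ha : G.settle.lab a = none
    · obtain ⟨y', hy', hp'⟩ := ih
      exact ⟨y', hy', .head ⟨ha, hab.2⟩ hp'⟩
    · exact ⟨a, ha, .refl⟩

/-- A game in which backward induction settles no further position. -/
structure IsReduced (G : LabelledGame V ι L) : Prop where
  exists_adj : ∀ u, G.lab u = none → ∃ v, G.adj u v ∧ G.lab v = none
  not_isBest : ∀ u v s, G.lab u = none → G.adj u v → G.lab v = some s → ¬ G.IsBest (G.own u) s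

theorem IsReduced.live (h : G.IsReduced) : G.Live := fun u hu =>
  (h.exists_adj u hu).imp fun _ hv => hv.1

theorem isReduced_settle [Finite L] (hlive : G.Live) : G.settle.IsReduced where
  exists_adj u hu := by
    by_contra! hall
    refine settle_lab_eq_none_iff.1 hu (settled_of_forall_adj hlive (lab_eq_none_of_settle hu) ?_)
    exact fun v hv => not_not.1 fun h => hall v hv (settle_lab_eq_none_iff.2 h)
  not_isBest u v s hu huv hv hbest := settle_lab_eq_none_iff.1 hu
    ⟨s, .best (lab_eq_none_of_settle hu) hbest huv (settle_lab_eq_some_iff.1 hv)⟩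

/-- A deviation reaches a settled position first as a deviation in the settled game, and from then
on the deviator can do no better than the outcome of that position. -/
theorem IsTerminalNE.rank_le_or_dev_of_settle (h : G.settle.IsTerminalNE σ z) {σ' : V → V}
    (hsettled : ∀ s u, G.Settled s u → G.lab u = none → G.Settled s (σ' u))
    (hunsettled : ∀ u, G.settle.lab u = none → σ' u = σ u) (hz : ¬ G.IsBest i z) {y : V}
    (hdev : ReflTransGen (G.Dev i σ') G.init y) :
    (∃ s, G.Settled s y ∧ G.rank i s ≤ G.rank i z) ∨
      G.settle.lab y = none ∧ ReflTransGen (G.settle.Dev i σ) G.init y := by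
  have of_dev : ∀ v, ReflTransGen (G.settle.Dev i σ) G.init v →
      (∃ s, G.Settled s v ∧ G.rank i s ≤ G.rank i z) ∨
        G.settle.lab v = none ∧ ReflTransGen (G.settle.Dev i σ) G.init v := by
    intro v hv
    cases hlab : G.settle.lab v with
    | none => exact .inr ⟨rfl, hv⟩
    | some s => exact .inl ⟨s, settle_lab_eq_some_iff.1 hlab, h.rank_le i v s hv hlab⟩
  induction hdev with
  | refl => exact of_dev _ .refl
  | @tail a b _ hab ih =>
    obtain ⟨ha, hadj, hmove⟩ := hab
    rcases ih with ⟨s, hs, hle⟩ | ⟨hnone, hdev⟩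
    · left
      rcases hmove with rfl | rfl
      · obtain ⟨s', hs', hle'⟩ := hs.rank_le_of_adj ha hadj fun hbest =>
          hz fun t => (hbest t).trans hle
        exact ⟨s', hs', hle'.trans hle⟩
      · exact ⟨s, hsettled s a hs ha, hle⟩
    · exact of_dev b (hdev.tail ⟨hnone, hadj, hmove.imp_right fun h => hunsettled a hnone ▸ h⟩)

theorem IsTerminalNE.exists_of_settle (h : G.settle.IsTerminalNE σ z) :
    ∃ σ', G.IsTerminalNE σ' z := by
  obtain ⟨f, hf⟩ := G.exists_settled_strategy
  let σ' (u : V) : V := if ∃ s, G.Settled s u then f u else σ u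
  have hsettled : ∀ s u, G.Settled s u → σ' u = f u := fun s u hu => if_pos ⟨s, hu⟩
  have hunsettled : ∀ u, G.settle.lab u = none → σ' u = σ u := fun u hu =>
    if_neg (settle_lab_eq_none_iff.1 hu)
  have hstep : ∀ s u, G.Settled s u → G.lab u = none → G.Settled s (σ' u) := fun s u hs hu =>
    hsettled s u hs ▸ ((hf s u hs).1 hu).2
  refine ⟨σ', ⟨fun u hu => ?_, ?_, fun i y s hdev hy => ?_⟩⟩
  · cases hlab : G.settle.lab u with
    | none => exact hunsettled u hlab ▸ h.adj u hlab
    | some s =>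
      have hs := settle_lab_eq_some_iff.1 hlab
      exact hsettled s u hs ▸ ((hf s u hs).1 hu).1
  · obtain ⟨y, hy, hp⟩ := h.play
    have hz : G.Settled z y := settle_lab_eq_some_iff.1 hy
    obtain ⟨t, ht, hpt⟩ := (hf z y hz).2
    refine ⟨t, ht, .trans (ReflTransGen.mono (fun a b hab => ?_) _ _ hp) ?_⟩
    · exact ⟨lab_eq_none_of_settle hab.1, (hunsettled a hab.1).trans hab.2⟩
    · have : G.Settled z t ∧ ReflTransGen (G.Play σ') y t := by
        clear ht
        induction hpt with
        | refl => exact ⟨hz, .refl⟩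
        | @tail a b _ hab ih =>
          obtain ⟨ha, rfl⟩ := hab
          exact ⟨((hf z a ih.1).1 ha).2, ih.2.tail ⟨ha, hsettled z a ih.1⟩⟩
      exact this.2
  · by_cases hz : G.IsBest i z
    · exact hz s
    · rcases h.rank_le_or_dev_of_settle hstep hunsettled hz hdev with ⟨s', hs', hle⟩ | ⟨hnone, -⟩
      · exact hs'.unique (.terminal hy) ▸ hle
      · exact absurd ⟨s, .terminal hy⟩ (settle_lab_eq_none_iff.1 hnone)

/-! ### Averting a label -/

/-- The attractor from which the opponents of `x`, that is the players for whom `x` is worst, can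
force the play to end at a label other than `x`. -/
inductive Averts (G : LabelledGame V ι L) (x : L) : V → Prop
  | terminal {u : V} {s : L} : G.lab u = some s → s ≠ x → Averts G x u
  | opponent {u v : V} : G.lab u = none → G.IsWorst (G.own u) x → G.adj u v → Averts G x v →
      Averts G x u
  | all {u : V} : G.lab u = none → ¬ G.IsWorst (G.own u) x → (∀ v, G.adj u v → Averts G x v) →
      Averts G x u

theorem Averts.lab_ne (h : G.Averts x u) (hs : G.lab u = some s) : s ≠ x := by
  cases h <;> simp_all

theorem Averts.exists_adj (h : G.Averts x u) (hu : G.lab u = none) (hx : G.IsWorst (G.own u) x) :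
    ∃ v, G.adj u v ∧ G.Averts x v := by
  cases h with
  | terminal hs => simp_all
  | opponent _ _ huv hv => exact ⟨_, huv, hv⟩
  | all _ hx' => exact absurd hx hx'

theorem Averts.of_adj (h : G.Averts x u) (hu : G.lab u = none) (hx : ¬ G.IsWorst (G.own u) x)
    (huv : G.adj u v) : G.Averts x v := by
  cases h with
  | terminal hs => simp_all
  | opponent _ hx' => exact absurd hx' hx
  | all _ _ hall => exact hall v huv

theorem lab_eq_of_not_averts (h : ¬ G.Averts z u) (hs : G.lab u = some s) : s = z :=
  not_not.1 fun hne => h (.terminal hs hne)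

theorem exists_adj_not_averts (hlive : G.Live) (hu : G.lab u = none) (h : ¬ G.Averts z u) :
    ∃ v, G.adj u v ∧ ¬ G.Averts z v := by
  by_cases hz : G.IsWorst (G.own u) z
  · exact (hlive u hu).imp fun v huv => ⟨huv, fun hv => h (.opponent hu hz huv hv)⟩
  · by_contra! hall
    exact h (.all hu hz hall)

/-- No player is an opponent of both labels, so at `u` one coalition may choose its move freely: any
move suits the other one. -/
theorem Averts.exists_adj_both (hlive : G.Live) (hxy : x ≠ y) (hx : G.Averts x u)
    (hy : G.Averts y u) (hu : G.lab u = none) :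
    ∃ v, G.adj u v ∧ G.Averts x v ∧ G.Averts y v := by
  by_cases hwx : G.IsWorst (G.own u) x
  · obtain ⟨v, huv, hv⟩ := hx.exists_adj hu hwx
    exact ⟨v, huv, hv, hy.of_adj hu (fun hwy => hxy (hwx.eq hwy)) huv⟩
  · have : ∃ v, G.adj u v ∧ G.Averts y v := by
      by_cases hwy : G.IsWorst (G.own u) y
      · exact hy.exists_adj hu hwy
      · exact (hlive u hu).imp fun v huv => ⟨huv, hy.of_adj hu hwy huv⟩
    obtain ⟨v, huv, hv⟩ := this
    exact ⟨v, huv, hx.of_adj hu hwx huv, hv⟩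

/-- Label `z` is reachable from `u` along a path on which its opponents can nowhere avert it. -/
def SafelyReaches (G : LabelledGame V ι L) (z : L) (u : V) : Prop :=
  ∃ y, G.lab y = some z ∧
    ReflTransGen (fun a b => G.Move a b ∧ ¬ G.Averts z a ∧ ¬ G.Averts z b) u y

theorem SafelyReaches.not_averts (h : G.SafelyReaches z u) : ¬ G.Averts z u := by
  obtain ⟨y, hy, hp⟩ := h
  rcases hp.cases_head with rfl | ⟨v, ⟨-, hu, -⟩, -⟩
  · exact fun hu => hu.lab_ne hy rfl
  · exact hu

theorem SafelyReaches.head (h : G.SafelyReaches z v) (hu : G.lab u = none) (huv : G.adj u v)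
    (hz : ¬ G.Averts z u) : G.SafelyReaches z u := by
  have hv := h.not_averts
  obtain ⟨y, hy, hp⟩ := h
  exact ⟨y, hy, .head ⟨⟨hu, huv⟩, hz, hv⟩ hp⟩

theorem IsReduced.exists_safe_strategy (hG : G.IsReduced) (z : L) :
    ∃ σ : V → V, (∀ u, G.lab u = none → G.adj u (σ u)) ∧
      (∀ u, G.lab u = none → ¬ G.Averts z u → ¬ G.Averts z (σ u)) ∧
      (∀ u s, G.lab u = none → G.lab (σ u) = some s → s = z) ∧
      ∀ u, G.SafelyReaches z u → ∃ y, G.lab y = some z ∧ ReflTransGen (G.Play σ) u y := by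
  obtain ⟨f, hf⟩ := exists_positional_path
    (fun a b => G.Move a b ∧ ¬ G.Averts z a ∧ ¬ G.Averts z b) {y | G.lab y = some z}
  have exists_move : ∀ u, G.lab u = none → ∃ v, G.adj u v ∧ (¬ G.Averts z u → ¬ G.Averts z v) ∧
      (∀ s, G.lab v = some s → s = z) ∧ (G.SafelyReaches z u → f u = v) := by
    intro u hu
    by_cases hsafe : G.SafelyReaches z u
    · obtain ⟨y, hy, hp⟩ := hf u hsafe
      rcases hp.cases_head with rfl | ⟨v, ⟨⟨huv, -, hv⟩, hfv⟩, -⟩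
      · simp_all
      · exact ⟨v, huv.2, fun _ => hv, fun s => lab_eq_of_not_averts hv, fun _ => hfv⟩
    by_cases hz : G.Averts z u
    · obtain ⟨v, huv, hv⟩ := hG.exists_adj u hu
      exact ⟨v, huv, fun h => absurd hz h, by simp [hv], fun h => absurd h hsafe⟩
    · obtain ⟨v, huv, hv⟩ := exists_adj_not_averts hG.live hu hz
      exact ⟨v, huv, fun _ => hv, fun s => lab_eq_of_not_averts hv, fun h => absurd h hsafe⟩
  choose! σ hadj hkeep hlab hfσ using exists_move
  refine ⟨σ, hadj, hkeep, fun u s hu => hlab u hu s, fun u hu => ?_⟩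
  obtain ⟨y, hy, hp⟩ := hf u hu
  refine ⟨y, hy, ?_⟩
  have : G.SafelyReaches z u ∧ ReflTransGen (G.Play σ) u y := by
    clear hu
    induction hp using ReflTransGen.head_induction_on with
    | refl => exact ⟨⟨y, hy, .refl⟩, .refl⟩
    | head hab _ ih =>
      obtain ⟨⟨⟨ha, huv⟩, hza, -⟩, hfab⟩ := hab
      have hsafe := ih.1.head ha huv hza
      exact ⟨hsafe, .head ⟨ha, (hfσ _ ha hsafe).symm.trans hfab⟩ ih.2⟩
  exact this.2

theorem not_averts_of_dev (hkeep : ∀ u, G.lab u = none → ¬ G.Averts z u → ¬ G.Averts z (σ u))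
    (hi : G.IsWorst i z) (hu : ¬ G.Averts z u) (hdev : ReflTransGen (G.Dev i σ) u v) :
    ¬ G.Averts z v := by
  induction hdev with
  | refl => exact hu
  | tail _ hab ih =>
    obtain ⟨ha, hadj, rfl | rfl⟩ := hab
    · exact fun hb => ih (.opponent ha hi hadj hb)
    · exact hkeep _ ha ih

theorem IsReduced.eq_or_not_isBest_of_dev (hG : G.IsReduced)
    (hlab : ∀ u s, G.lab u = none → G.lab (σ u) = some s → s = z)
    (hu : ¬ G.Averts z u) (hdev : ReflTransGen (G.Dev i σ) u v) (hs : G.lab v = some s) :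
    s = z ∨ ¬ G.IsBest i s := by
  cases hdev with
  | refl => exact .inl (lab_eq_of_not_averts hu hs)
  | tail _ hab =>
    obtain ⟨ha, hadj, rfl | rfl⟩ := hab
    · exact .inr (hG.not_isBest _ _ s ha hadj hs)
    · exact .inl (hlab _ s ha hs)

/-! ### Three labels -/

section ThreeLabels

variable {G : LabelledGame V ι (Fin 3)} {x y z s : Fin 3}

theorem rank_le_of_not_isBest_of_not_isWorst (hs : ¬ G.IsBest i s) (hz : ¬ G.IsWorst i z) :
    G.rank i s ≤ G.rank i z := by
  by_contra! hlt
  simp only [IsBest, IsWorst, not_forall, not_le] at hs hz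
  obtain ⟨b, hb⟩ := hs
  obtain ⟨a, ha⟩ := hz
  have hne : ∀ {c d}, G.rank i c < G.rank i d → c ≠ d := fun h hcd => h.ne (congrArg _ hcd)
  have := hne ha
  have := hne hlt
  have := hne hb
  have := hne (ha.trans hlt)
  have := hne (hlt.trans hb)
  have := hne ((ha.trans hlt).trans hb)
  omega

theorem IsReduced.exists_isTerminalNE_of_safelyReaches (hG : G.IsReduced)
    (hz : G.SafelyReaches z G.init) : ∃ σ, G.IsTerminalNE σ z := by
  obtain ⟨σ, hadj, hkeep, hlab, hplay⟩ := hG.exists_safe_strategy z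
  refine ⟨σ, hadj, hplay _ hz, fun i y s hdev hs => ?_⟩
  by_cases hi : G.IsWorst i z
  · exact (congrArg _ (lab_eq_of_not_averts (not_averts_of_dev hkeep hi hz.not_averts hdev) hs)).le
  · rcases hG.eq_or_not_isBest_of_dev hlab hz.not_averts hdev hs with rfl | hbest
    · exact le_rfl
    · exact rank_le_of_not_isBest_of_not_isWorst hbest hi

theorem Averts.not_averts_third (hlive : G.Live) (hxy : x ≠ y) (hxz : x ≠ z) (hyz : y ≠ z)
    (hx : G.Averts x u) : G.Averts y u → ¬ G.Averts z u := by
  induction hx with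
  | terminal hs hne =>
    intro hy hz
    have := hy.lab_ne hs
    have := hz.lab_ne hs
    omega
  | opponent hu hwx huv _ ih =>
    intro hy hz
    exact ih (hy.of_adj hu (fun hwy => hxy (hwx.eq hwy)) huv)
      (hz.of_adj hu (fun hwz => hxz (hwx.eq hwz)) huv)
  | all hu _ _ ih =>
    intro hy hz
    obtain ⟨v, huv, hyv, hzv⟩ := hy.exists_adj_both hlive hyz hz hu
    exact ih v huv hyv hzv

theorem Averts.safelyReaches_third (hlive : G.Live) (hxy : x ≠ y) (hxz : x ≠ z) (hyz : y ≠ z)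
    (hx : G.Averts x u) : G.Averts y u → G.SafelyReaches z u := by
  induction hx with
  | @terminal u s hs hne =>
    intro hy
    have := hy.lab_ne hs
    obtain rfl : s = z := by omega
    exact ⟨_, hs, .refl⟩
  | opponent hu hwx huv hv ih =>
    intro hy
    exact (ih (hy.of_adj hu (fun hwy => hxy (hwx.eq hwy)) huv)).head hu huv
      (not_averts_third hlive hxy hxz hyz (.opponent hu hwx huv hv) hy)
  | all hu hwx hall ih =>
    intro hy
    have hx := Averts.all hu hwx hall
    obtain ⟨v, huv, -, hyv⟩ := hx.exists_adj_both hlive hxy hy hu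
    exact (ih v huv hyv).head hu huv (hx.not_averts_third hlive hxy hxz hyz hy)

theorem Averts.exists_safelyReaches_of_ne (hlive : G.Live) (hxy : x ≠ y) (hx : G.Averts x u)
    (hy : G.Averts y u) : ∃ z, z ≠ x ∧ G.SafelyReaches z u := by
  have exists_third : ∀ x y : Fin 3, ∃ z, x ≠ z ∧ y ≠ z := by decide
  obtain ⟨z, hxz, hyz⟩ := exists_third x y
  exact ⟨z, hxz.symm, hx.safelyReaches_third hlive hxy hxz hyz hy⟩

theorem Averts.exists_safelyReaches_of_adj (hlive : G.Live) (hx : G.Averts x u)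
    (hu : G.lab u = none) (huv : G.adj u v) (hv : ∃ z, z ≠ x ∧ G.SafelyReaches z v) :
    ∃ z, z ≠ x ∧ G.SafelyReaches z u := by
  obtain ⟨z, hzx, hz⟩ := hv
  by_cases hzu : G.Averts z u
  · exact hx.exists_safelyReaches_of_ne hlive hzx.symm hzu
  · exact ⟨z, hzx, hz.head hu huv hzu⟩

theorem Averts.exists_safelyReaches (hlive : G.Live) (hx : G.Averts x u) :
    ∃ z, z ≠ x ∧ G.SafelyReaches z u := by
  induction hx with
  | @terminal u s hs hne =>
    exact ⟨s, hne, u, hs, .refl⟩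
  | opponent hu hwx huv hv ih =>
    exact (Averts.opponent hu hwx huv hv).exists_safelyReaches_of_adj hlive hu huv ih
  | @all u hu hwx hall ih =>
    obtain ⟨v, huv⟩ := hlive u hu
    exact (Averts.all hu hwx hall).exists_safelyReaches_of_adj hlive hu huv (ih v huv)

theorem CanEnd.exists_safelyReaches (hlive : G.Live) (hend : G.CanEnd) :
    ∃ z, G.SafelyReaches z G.init := by
  obtain ⟨y, hy, hp⟩ := hend
  generalize G.init = v₀ at hp ⊢
  induction hp using ReflTransGen.head_induction_on with
  | refl =>
    obtain ⟨s, hs⟩ := Option.ne_none_iff_exists'.1 hy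
    exact ⟨s, y, hs, .refl⟩
  | @head a _ hab _ ih =>
    obtain ⟨z, hz⟩ := ih
    by_cases hza : G.Averts z a
    · obtain ⟨z', -, hz'⟩ := hza.exists_safelyReaches hlive
      exact ⟨z', hz'⟩
    · exact ⟨z, hz.head hab.1 hab.2 hza⟩

theorem exists_isTerminalNE (hlive : G.Live) (hend : G.CanEnd) : ∃ σ z, G.IsTerminalNE σ z := by
  have hred := isReduced_settle hlive
  obtain ⟨z, hz⟩ := hend.settle.exists_safelyReaches hred.live
  obtain ⟨σ, hσ⟩ := hred.exists_isTerminalNE_of_safelyReaches hz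
  obtain ⟨σ', hσ'⟩ := hσ.exists_of_settle
  exact ⟨σ', z, hσ'⟩

end ThreeLabels

end LabelledGame

/-! ### Deterministic graphical games -/

namespace DGGame

variable {V ι L : Type*} (Γ : DGGame V ι)

/-- The moves made in the situation `σ`. -/
def Play (σ : V → V) (u v : V) : Prop := ¬ Γ.Terminal u ∧ σ u = v

theorem iter_succ (σ : V → V) (n : ℕ) : Γ.iter σ (n + 1) = Γ.step σ (Γ.iter σ n) :=
  Function.iterate_succ_apply' _ _ _

theorem iter_eq_of_terminal_of_le {σ : V → V} {m n : ℕ} (hm : Γ.Terminal (Γ.iter σ m))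
    (hmn : m ≤ n) : Γ.iter σ n = Γ.iter σ m := by
  induction n, hmn using Nat.le_induction with
  | base => rfl
  | succ n _ ih => rw [iter_succ, ih, step, if_pos hm]

theorem play_reflTransGen_iter (σ : V → V) (n : ℕ) :
    ReflTransGen (Γ.Play σ) Γ.init (Γ.iter σ n) := by
  induction n with
  | zero => exact .refl
  | succ n ih =>
    rw [iter_succ, step]
    split_ifs with hn
    · exact ih
    · exact ih.tail ⟨hn, rfl⟩

theorem exists_iter_eq_of_play {σ : V → V} {y : V} (h : ReflTransGen (Γ.Play σ) Γ.init y) :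
    ∃ n, Γ.iter σ n = y := by
  induction h with
  | refl => exact ⟨0, rfl⟩
  | tail _ hab ih =>
    obtain ⟨n, rfl⟩ := ih
    exact ⟨n + 1, by rw [iter_succ, step, if_neg hab.1, hab.2]⟩

theorem outcome_eq_some_iff {σ : V → V} {y : V} :
    Γ.outcome σ = some y ↔ Γ.Terminal y ∧ ReflTransGen (Γ.Play σ) Γ.init y := by
  constructor
  · intro h
    by_cases hex : ∃ n, Γ.Terminal (Γ.iter σ n)
    · obtain rfl : Γ.iter σ (Nat.find hex) = y := by simpa [outcome, hex] using h
      exact ⟨Nat.find_spec hex, Γ.play_reflTransGen_iter σ _⟩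
    · simp [outcome, hex] at h
  · rintro ⟨hy, hp⟩
    obtain ⟨n, rfl⟩ := Γ.exists_iter_eq_of_play hp
    have hex : ∃ n, Γ.Terminal (Γ.iter σ n) := ⟨n, hy⟩
    rw [outcome, dif_pos hex,
      Γ.iter_eq_of_terminal_of_le (Nat.find_spec hex) (Nat.find_min' hex hy)]

/-- The labelled game of `Γ`, for a labelling `e` of the terminals and rankings `ρ` of the
labels. -/
noncomputable def toLabelled (e : {t // Γ.Terminal t} ↪ L) (ρ : ι → L ↪ ℕ) :
    LabelledGame V ι L where
  adj := Γ.adj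
  lab u := if h : Γ.Terminal u then some (e ⟨u, h⟩) else none
  own := Γ.owner
  rank := ρ
  init := Γ.init

section ToLabelled

variable {Γ} {e : {t // Γ.Terminal t} ↪ L} {ρ : ι → L ↪ ℕ}

theorem toLabelled_lab_eq_none_iff {u : V} :
    (Γ.toLabelled e ρ).lab u = none ↔ ¬ Γ.Terminal u := by
  simp [toLabelled]

theorem toLabelled_lab_of_terminal {u : V} (hu : Γ.Terminal u) :
    (Γ.toLabelled e ρ).lab u = some (e ⟨u, hu⟩) := dif_pos hu

theorem live_toLabelled : (Γ.toLabelled e ρ).Live := fun u hu => by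
  simpa [Terminal, toLabelled] using toLabelled_lab_eq_none_iff.1 hu

theorem canEnd_toLabelled (hreach : ∃ t, Γ.Terminal t ∧ Γ.Reaches Γ.init t) :
    (Γ.toLabelled e ρ).CanEnd := by
  obtain ⟨t, ht, hp⟩ := hreach
  refine ⟨t, fun h => toLabelled_lab_eq_none_iff.1 h ht,
    ReflTransGen.mono (fun a b hab => ?_) _ _ hp⟩
  exact ⟨toLabelled_lab_eq_none_iff.2 fun ha => ha b hab, hab⟩

theorem toLabelled_play (σ : V → V) : (Γ.toLabelled e ρ).Play σ = Γ.Play σ := by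
  ext u v
  rw [LabelledGame.Play, toLabelled_lab_eq_none_iff, Play]

theorem toLabelled_dev_of_play {σ σ' : V → V} {i : ι} (hσ' : Γ.IsSituation σ')
    (hdev : ∀ x, Γ.owner x ≠ i → σ' x = σ x) {u v : V} (h : Γ.Play σ' u v) :
    (Γ.toLabelled e ρ).Dev i σ u v := by
  obtain ⟨hu, rfl⟩ := h
  refine ⟨toLabelled_lab_eq_none_iff.2 hu, hσ' u hu, ?_⟩
  exact or_iff_not_imp_left.2 fun ho => (hdev u ho).symm

theorem isTerminalNE_of_toLabelled {σ : V → V} {z : L}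
    (hρ : ∀ i (s t : {t // Γ.Terminal t}), Γ.pref i (some t) (some s) → ρ i (e s) < ρ i (e t))
    (hinf : ∀ i t, Γ.Terminal t → ¬ Γ.pref i none (some t))
    (h : (Γ.toLabelled e ρ).IsTerminalNE σ z) : Γ.IsTerminalNE σ := by
  obtain ⟨y, hyz, hp⟩ := h.play
  have hy : Γ.Terminal y := by
    by_contra hy
    simp [toLabelled_lab_eq_none_iff.2 hy] at hyz
  obtain rfl : e ⟨y, hy⟩ = z := by simpa [toLabelled_lab_of_terminal hy] using hyz
  have hout : Γ.outcome σ = some y :=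
    Γ.outcome_eq_some_iff.2 ⟨hy, toLabelled_play (e := e) (ρ := ρ) σ ▸ hp⟩
  refine ⟨⟨fun x hx => h.adj x (toLabelled_lab_eq_none_iff.2 hx), ?_⟩, y, hout⟩
  intro i σ' hσ' hdev hbetter
  rw [hout] at hbetter
  cases hout' : Γ.outcome σ' with
  | none => exact hinf i y hy (hout' ▸ hbetter)
  | some t =>
    obtain ⟨ht, hpt⟩ := Γ.outcome_eq_some_iff.1 hout'
    have hle := h.rank_le i t _
      (ReflTransGen.mono (fun _ _ => toLabelled_dev_of_play hσ' hdev) _ _ hpt)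
      (toLabelled_lab_of_terminal ht)
    exact hle.not_gt (hρ i ⟨y, hy⟩ ⟨t, ht⟩ (hout' ▸ hbetter))

end ToLabelled

theorem PrefOrder.isStrictOrder {Γ : DGGame V ι} (h : Γ.PrefOrder) (i : ι) :
    IsStrictOrder Γ.OutcomeSet fun a b => Γ.pref i a b where
  irrefl a := (h i).1 a a.2
  trans a b c := (h i).2.1 a a.2 b b.2 c c.2

theorem exists_terminal_embedding (h : {x | Γ.Terminal x}.encard ≤ 3) :
    Nonempty ({t // Γ.Terminal t} ↪ Fin 3) := by
  obtain ⟨hfin, hcard⟩ := Set.encard_le_coe_iff_finite_ncard_le.1 h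
  have : Fintype {t // Γ.Terminal t} := hfin.fintype
  refine Function.Embedding.nonempty_of_card_le ?_
  rw [Fintype.card_fin, ← Nat.card_eq_fintype_card]
  exact hcard

theorem exists_rank [Finite L] (e : {t // Γ.Terminal t} ↪ L) (i : ι)
    (h : IsStrictOrder Γ.OutcomeSet fun a b => Γ.pref i a b) :
    ∃ ρ : L ↪ ℕ, ∀ s t : {t // Γ.Terminal t}, Γ.pref i (some t) (some s) → ρ (e s) < ρ (e t) := by
  let outcome (t : {t // Γ.Terminal t}) : Γ.OutcomeSet := ⟨some t, .inr ⟨t, t.2, rfl⟩⟩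
  let worse (s t : {t // Γ.Terminal t}) : Prop := Γ.pref i (outcome t) (outcome s)
  have : IsStrictOrder _ worse :=
    { irrefl := fun t => h.irrefl (outcome t)
      trans := fun r s t hrs hst => h.trans (outcome t) (outcome s) (outcome r) hst hrs }
  have := isStrictOrder_map worse e
  obtain ⟨ρ, hρ⟩ := exists_embedding_nat_of_isStrictOrder (Relation.Map worse e e)
  exact ⟨ρ, fun s t hst => hρ _ _ ⟨s, t, hst, rfl, rfl⟩⟩

end DGGame

theorem stmt1_general {V ι : Type*} (Γ : DGGame V ι)
    (hpref : ∀ i, IsStrictOrder Γ.OutcomeSet fun a b => Γ.pref i a b)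
    (hterm : Γ.TerminalGame)
    (hT3 : {x | Γ.Terminal x}.encard ≤ 3)
    (hreach : ∃ t, Γ.Terminal t ∧ Γ.Reaches Γ.init t) :
    ∃ σ : V → V, Γ.IsTerminalNE σ := by
  obtain ⟨e⟩ := Γ.exists_terminal_embedding hT3
  choose ρ hρ using fun i => Γ.exists_rank e i (hpref i)
  have hinf : ∀ i t, Γ.Terminal t → ¬ Γ.pref i none (some t) := fun i t ht hlt =>
    (hpref i).irrefl ⟨none, .inl rfl⟩ <|
      (hpref i).trans _ ⟨some t, .inr ⟨t, ht, rfl⟩⟩ _ hlt (hterm i t ht)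
  obtain ⟨σ, z, hσ⟩ := LabelledGame.exists_isTerminalNE
    (DGGame.live_toLabelled (e := e) (ρ := ρ)) (DGGame.canEnd_toLabelled hreach)
  exact ⟨σ, DGGame.isTerminalNE_of_toLabelled hρ hinf hσ⟩

/-- Every terminal DG game with at most 3 terminals, in which some terminal is
reachable from the initial position by a directed path, has a terminal Nash
equilibrium. -/
theorem stmt1 {V ι : Type*} [Finite V] (Γ : DGGame V ι)
    (hinit : ¬ Γ.Terminal Γ.init) (hpref : Γ.PrefOrder)
    (hterm : Γ.TerminalGame)
    (hT3 : {x | Γ.Terminal x}.ncard ≤ 3)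
    (hreach : ∃ t, Γ.Terminal t ∧ Γ.Reaches Γ.init t) :
    ∃ σ : V → V, Γ.IsTerminalNE σ :=
  stmt1_general Γ hpref.isStrictOrder hterm
    (Set.encard_le_coe_iff_finite_ncard_le.2 ⟨Set.toFinite _, hT3⟩) hreach
end

section
/- Every play-once deterministic graphical game has a Nash equilibrium (in pure stationary strategies). -/
/-!
Call a position terminating if every walk from it is finite; backward induction values these
positions. A leaver is a position with a move to a terminating position that its owner prefers to
`∞`. Forbid leavers all moves to non-terminating positions, and call a position settled if every
walk along the remaining moves is finite.

If the initial position is not settled, let unsettled positions move to unsettled ones and other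
non-terminating positions to non-terminating ones, so that the outcome is `∞`. A deviation matters
only if it leads to a terminating position, and it is no improvement, since leavers are settled.

If the initial position is settled, extend the remaining moves between settled positions to a
maximal well-founded set `H` of moves between settled positions, and let `o` be the backward
induction outcome on `H`. The positions that can reach `o` along `H` are redirected to do so; those
of value `o`, which contain the play, and all other settled positions keep their backward induction
moves. Let `v` on the play deviate to `u`.
* If `u` cannot reach `o` along `H`, then by maximality the move to `u` belongs to `H` or leads to
  an unsettled position; a move of `H` yields the value of `u`, which is no better than `o`.
* If `u` can reach `o` along `H`, the outcome remains `o` unless the play returns to `v`. It returns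
  along `H`, so the move to `u` is missing from `H`.
* If the move to `u` is missing from `H`, then `v` is a leaver, so the backward induction value `o`
  of `v` is no worse than `∞`, the outcome of returning to `v` and of leaving the settled positions.
-/

open Classical

section WellFounded

variable {α : Type*}

lemma wellFounded_restrict_acc (r : α → α → Prop) : WellFounded fun a b => r a b ∧ Acc r b := by
  refine ⟨fun b => ?_⟩
  by_cases hb : Acc r b
  · exact Subrelation.accessible And.left hb
  · exact ⟨b, fun a hab => absurd hab.2 hb⟩

lemma wellFounded_or_pair {r : α → α → Prop} (hr : WellFounded r) {a b : α}
    (hba : ¬ Relation.ReflTransGen r b a) :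
    WellFounded fun x y => r x y ∨ x = a ∧ y = b := by
  have acc_of_not_above : ∀ y, ¬ Relation.ReflTransGen r b y →
      Acc (fun x y => r x y ∨ x = a ∧ y = b) y := by
    intro y
    induction y using hr.induction with
    | _ y ih =>
      refine fun hy => ⟨y, ?_⟩
      rintro x (hxy | ⟨-, rfl⟩)
      · exact ih x hxy fun hx => hy (hx.tail hxy)
      · exact absurd .refl hy
  refine ⟨fun y => ?_⟩
  induction y using hr.induction with
  | _ y ih =>
    refine ⟨y, ?_⟩
    rintro x (hxy | ⟨rfl, -⟩)
    · exact ih x hxy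
    · exact acc_of_not_above x hba

lemma exists_maximal_wellFounded [Finite α] {s t : α → α → Prop} (hst : s ≤ t)
    (hs : WellFounded s) :
    ∃ r, s ≤ r ∧ r ≤ t ∧ WellFounded r ∧
      ∀ a b, t a b → ¬ r a b → Relation.ReflTransGen r b a := by
  obtain ⟨r, hsr, hmax⟩ := (Set.toFinite
    {r : α → α → Prop | r ≤ t ∧ WellFounded r}).exists_le_maximal ⟨hst, hs⟩
  refine ⟨r, hsr, hmax.prop.1, hmax.prop.2, fun a b hab => ?_⟩
  contrapose!
  intro hba
  have hle : (fun x y => r x y ∨ x = a ∧ y = b) ≤ t := by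
    rintro x y (hxy | ⟨rfl, rfl⟩)
    · exact hmax.prop.1 x y hxy
    · exact hab
  exact hmax.le_of_ge ⟨hle, wellFounded_or_pair hmax.prop.2 hba⟩ (fun x y => Or.inl) a b
    (Or.inr ⟨rfl, rfl⟩)

end WellFounded

namespace DGGame

variable {V ι : Type*} {Γ : DGGame V ι}

section Play

variable {σ σ' : V → V} {u v t : V}

lemma step_of_terminal (σ : V → V) (h : Γ.Terminal v) : Γ.step σ v = v := if_pos h

lemma step_of_not_terminal (σ : V → V) (h : ¬ Γ.Terminal v) : Γ.step σ v = σ v := if_neg h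

lemma step_congr (h : ¬ Γ.Terminal v → σ' v = σ v) : Γ.step σ' v = Γ.step σ v := by
  unfold step
  split_ifs with ht
  · rfl
  · exact h ht

lemma mapsTo_step {S : Set V} (h : ∀ v ∈ S, ¬ Γ.Terminal v → σ v ∈ S) :
    Set.MapsTo (Γ.step σ) S S := by
  intro v hv
  by_cases ht : Γ.Terminal v
  · rwa [step_of_terminal σ ht]
  · rw [step_of_not_terminal σ ht]
    exact h v hv ht

/-- The set of positions visited by the play of the situation `σ` started at `u`. -/
def play (Γ : DGGame V ι) (σ : V → V) (u : V) : Set V :=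
  {v | ∃ n, (Γ.step σ)^[n] u = v}

lemma play_subset {S : Set V} (hS : Set.MapsTo (Γ.step σ) S S) (hu : u ∈ S) :
    Γ.play σ u ⊆ S := by
  rintro _ ⟨n, rfl⟩
  exact hS.iterate n hu

lemma play_step_subset : Γ.play σ (Γ.step σ u) ⊆ Γ.play σ u := by
  rintro _ ⟨n, rfl⟩
  exact ⟨n + 1, rfl⟩

/-- The outcome of the situation `σ` when the play is started at `u` instead of the initial
position. -/
noncomputable def outcomeFrom (Γ : DGGame V ι) (σ : V → V) (u : V) : Option V :=
  { Γ with init := u }.outcome σ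

lemma outcomeFrom_init (Γ : DGGame V ι) (σ : V → V) : Γ.outcomeFrom σ Γ.init = Γ.outcome σ := rfl

lemma iterate_step_of_terminal (σ : V → V) (h : Γ.Terminal v) (n : ℕ) :
    (Γ.step σ)^[n] v = v :=
  Function.iterate_fixed (step_of_terminal σ h) n

lemma outcomeFrom_eq_some_iff :
    Γ.outcomeFrom σ u = some t ↔ Γ.Terminal t ∧ t ∈ Γ.play σ u := by
  change (if h : ∃ n, Γ.Terminal ((Γ.step σ)^[n] u) then
    some ((Γ.step σ)^[Nat.find h] u) else none) = some t ↔ _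
  constructor
  · split_ifs with h <;> rintro ⟨rfl⟩
    exact ⟨Nat.find_spec h, Nat.find h, rfl⟩
  · rintro ⟨ht, n, rfl⟩
    have h : ∃ n, Γ.Terminal ((Γ.step σ)^[n] u) := ⟨n, ht⟩
    obtain ⟨k, hk⟩ := Nat.exists_eq_add_of_le' (Nat.find_min' h ht)
    have hfind : (Γ.step σ)^[n] u = (Γ.step σ)^[Nat.find h] u := by
      conv_lhs => rw [hk, Function.iterate_add_apply]
      exact iterate_step_of_terminal σ (Nat.find_spec h) k
    rw [dif_pos h]
    exact congrArg some hfind.symm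

lemma outcomeFrom_eq_none (h : ∀ t ∈ Γ.play σ u, ¬ Γ.Terminal t) : Γ.outcomeFrom σ u = none :=
  Option.eq_none_iff_forall_ne_some.2 fun t ht =>
    h t (outcomeFrom_eq_some_iff.1 ht).2 (outcomeFrom_eq_some_iff.1 ht).1

lemma outcomeFrom_mem (Γ : DGGame V ι) (σ : V → V) (u : V) :
    Γ.outcomeFrom σ u ∈ Γ.OutcomeSet := by
  rcases h : Γ.outcomeFrom σ u with _ | t
  · exact Or.inl rfl
  · exact Or.inr ⟨t, (outcomeFrom_eq_some_iff.1 h).1, rfl⟩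

lemma outcomeFrom_of_terminal (σ : V → V) (h : Γ.Terminal v) : Γ.outcomeFrom σ v = some v :=
  outcomeFrom_eq_some_iff.2 ⟨h, 0, rfl⟩

lemma outcomeFrom_step (Γ : DGGame V ι) (σ : V → V) (u : V) :
    Γ.outcomeFrom σ (Γ.step σ u) = Γ.outcomeFrom σ u := by
  refine Option.ext fun t => ?_
  rw [outcomeFrom_eq_some_iff, outcomeFrom_eq_some_iff]
  refine and_congr_right fun ht => ⟨fun h => play_step_subset h, ?_⟩
  rintro ⟨n | n, rfl⟩
  · exact ⟨0, step_of_terminal σ ht⟩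
  · exact ⟨n, rfl⟩

lemma outcomeFrom_of_mem_play (h : v ∈ Γ.play σ u) : Γ.outcomeFrom σ v = Γ.outcomeFrom σ u := by
  obtain ⟨n, rfl⟩ := h
  induction n with
  | zero => rfl
  | succ n ih => rw [Function.iterate_succ_apply', outcomeFrom_step, ih]

lemma outcomeFrom_eq_none_of_mem_periodicPts (hper : v ∈ Function.periodicPts (Γ.step σ))
    (hv : ¬ Γ.Terminal v) : Γ.outcomeFrom σ v = none := by
  refine outcomeFrom_eq_none ?_
  rintro _ ⟨n, rfl⟩ ht
  have hfixed : Function.IsFixedPt (Γ.step σ) v := by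
    rw [← Function.minimalPeriod_eq_one_iff_isFixedPt,
      ← Function.minimalPeriod_apply_iterate hper n,
      Function.minimalPeriod_eq_one_iff_isFixedPt]
    exact step_of_terminal σ ht
  rw [hfixed.iterate n] at ht
  exact hv ht

lemma outcomeFrom_eq_of_wellFounded {H : V → V → Prop} (hH : WellFounded (Function.swap H))
    {S : Set V} {f : V → Option V} (hterm : ∀ v ∈ S, Γ.Terminal v → f v = some v)
    (hmove : ∀ v ∈ S, ¬ Γ.Terminal v → H v (σ v) ∧ σ v ∈ S ∧ f (σ v) = f v) (hv : v ∈ S) :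
    Γ.outcomeFrom σ v = f v := by
  induction v using hH.induction with
  | _ v ih =>
    by_cases ht : Γ.Terminal v
    · rw [outcomeFrom_of_terminal σ ht, hterm v hv ht]
    · obtain ⟨hHv, hS, hf⟩ := hmove v hv ht
      rw [← outcomeFrom_step, step_of_not_terminal σ ht, ih _ hHv hS, hf]

end Play

section Deviation

variable {σ σ' : V → V} {u v : V}

lemma outcomeFrom_congr (h : ∀ x ∈ Γ.play σ u, Γ.step σ' x = Γ.step σ x) :
    Γ.outcomeFrom σ' u = Γ.outcomeFrom σ u := by
  have hiter : ∀ n, (Γ.step σ')^[n] u = (Γ.step σ)^[n] u := by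
    intro n
    induction n with
    | zero => rfl
    | succ n ih =>
      rw [Function.iterate_succ_apply', Function.iterate_succ_apply', ih]
      exact h _ ⟨n, rfl⟩
  have hplay : Γ.play σ' u = Γ.play σ u := Set.ext fun v => by
    simp only [play, hiter]
  refine Option.ext fun t => ?_
  rw [outcomeFrom_eq_some_iff, outcomeFrom_eq_some_iff, hplay]

lemma mem_play_of_mem_play (hσ : ∀ x ≠ v, Γ.step σ' x = Γ.step σ x) (hv : v ∈ Γ.play σ u) :
    v ∈ Γ.play σ' u := by
  obtain ⟨n, hn⟩ := hv
  induction n generalizing u with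
  | zero => exact ⟨0, hn⟩
  | succ n ih =>
    by_cases huv : u = v
    · exact ⟨0, huv⟩
    · have hstep : v ∈ Γ.play σ' (Γ.step σ' u) := hσ u huv ▸ ih hn
      exact play_step_subset hstep

lemma outcomeFrom_deviation (hσ : ∀ x ≠ v, Γ.step σ' x = Γ.step σ x)
    (ht : ¬ Γ.Terminal v) (hv : v ∈ Γ.play σ u) :
    Γ.outcomeFrom σ' u = if v ∈ Γ.play σ (σ' v) then none else Γ.outcomeFrom σ (σ' v) := by
  rw [← outcomeFrom_of_mem_play (mem_play_of_mem_play hσ hv)]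
  split_ifs with hreturn
  · obtain ⟨n, hn⟩ := mem_play_of_mem_play hσ hreturn
    rw [← step_of_not_terminal σ' ht] at hn
    exact outcomeFrom_eq_none_of_mem_periodicPts ⟨n + 1, n.succ_pos, hn⟩ ht
  · rw [← outcomeFrom_step, step_of_not_terminal σ' ht]
    exact outcomeFrom_congr fun x hx => hσ x fun hxv => hreturn (hxv ▸ hx)

end Deviation

section Preference

/-- The preference of player `i` as a relation on the outcome set. -/
abbrev outcomePref (Γ : DGGame V ι) (i : ι) (x y : Γ.OutcomeSet) : Prop := Γ.pref i x y

lemma PrefOrder.isStrictOrder_s2 (h : Γ.PrefOrder) (i : ι) :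
    IsStrictOrder Γ.OutcomeSet (Γ.outcomePref i) where
  irrefl x := (h i).1 x x.2
  trans x y z := (h i).2.1 x x.2 y y.2 z z.2

lemma PlayOnce.injOn_owner (h : Γ.PlayOnce) : Set.InjOn Γ.owner {v | ¬ Γ.Terminal v} := by
  intro v hv w hw hvw
  obtain ⟨x, hx⟩ := Set.ncard_eq_one.1 (h (Γ.owner w))
  exact (hx.le ⟨hv, hvw⟩ : v = x).trans (hx.le ⟨hw, rfl⟩ : w = x).symm

variable [∀ i, IsStrictOrder Γ.OutcomeSet (Γ.outcomePref i)]

lemma not_pref_self (i : ι) {x : Option V} (hx : x ∈ Γ.OutcomeSet) : ¬ Γ.pref i x x :=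
  irrefl_of (Γ.outcomePref i) ⟨x, hx⟩

lemma pref_trans {i : ι} {x y z : Option V} (hx : x ∈ Γ.OutcomeSet) (hy : y ∈ Γ.OutcomeSet)
    (hz : z ∈ Γ.OutcomeSet) (hxy : Γ.pref i x y) (hyz : Γ.pref i y z) : Γ.pref i x z :=
  trans_of (Γ.outcomePref i) (a := ⟨x, hx⟩) (b := ⟨y, hy⟩) (c := ⟨z, hz⟩) hxy hyz

lemma isNE_of_forall_move (howner : Set.InjOn Γ.owner {v | ¬ Γ.Terminal v}) {σ : V → V}
    (hσ : Γ.IsSituation σ) {S : Set V} (hinit : Γ.init ∈ S)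
    (hS : ∀ v ∈ S, ¬ Γ.Terminal v → σ v ∈ S)
    (hmove : ∀ v ∈ S, ∀ u, Γ.adj v u →
      ¬ Γ.pref (Γ.owner v) (Γ.outcomeFrom σ u) (Γ.outcome σ) ∧
      (v ∈ Γ.play σ u → ¬ Γ.pref (Γ.owner v) none (Γ.outcome σ))) :
    Γ.IsNE σ := by
  refine ⟨hσ, fun i σ' hσ' hne => ?_⟩
  rw [← outcomeFrom_init Γ σ']
  by_cases hv : ∃ v ∈ Γ.play σ Γ.init, ¬ Γ.Terminal v ∧ Γ.owner v = i
  · obtain ⟨v, hplay, ht, rfl⟩ := hv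
    have hstep : ∀ x ≠ v, Γ.step σ' x = Γ.step σ x := fun x hxv =>
      step_congr fun hx => hne x fun ho => hxv (howner hx ht ho)
    have hv := hmove v (play_subset (mapsTo_step hS) hinit hplay) (σ' v) (hσ' v ht)
    rw [outcomeFrom_deviation hstep ht hplay]
    split_ifs with hreturn
    · exact hv.2 hreturn
    · exact hv.1
  · have hsame : Γ.outcomeFrom σ' Γ.init = Γ.outcome σ :=
      outcomeFrom_congr fun x hx => step_congr fun ht => hne x fun ho => hv ⟨x, hx, ht, ho⟩
    rw [hsame]
    exact not_pref_self i (outcomeFrom_mem Γ σ Γ.init)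

end Preference

section BackwardInduction

lemma exists_not_pref [Finite V] [∀ i, IsStrictOrder Γ.OutcomeSet (Γ.outcomePref i)] (i : ι)
    {s : Set (Option V)} (hs : s ⊆ Γ.OutcomeSet) (hne : s.Nonempty) :
    ∃ a ∈ s, ∀ b ∈ s, ¬ Γ.pref i b a := by
  have hwf : WellFounded (Γ.outcomePref i) := Finite.wellFounded_of_trans_of_irrefl _
  obtain ⟨x, hx⟩ := hne
  obtain ⟨a, ha, hmin⟩ := hwf.has_min (Subtype.val ⁻¹' s) ⟨⟨x, hs hx⟩, hx⟩
  exact ⟨a, ha, fun b hb => hmin ⟨b, hs hb⟩ hb⟩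

/-- An outcome of `s` to which player `i` prefers no other outcome of `s`, with junk value `∞` if
there is none. It is selected as a function of `s`, so that backward induction values depend only
on the moves below a position even if preferences are not total. -/
noncomputable def bestOutcome (Γ : DGGame V ι) (i : ι) (s : Set (Option V)) : Option V :=
  if h : ∃ a ∈ s, ∀ b ∈ s, ¬ Γ.pref i b a then h.choose else none

lemma bestOutcome_spec [Finite V] [∀ i, IsStrictOrder Γ.OutcomeSet (Γ.outcomePref i)] (i : ι)
    {s : Set (Option V)} (hs : s ⊆ Γ.OutcomeSet) (hne : s.Nonempty) :
    Γ.bestOutcome i s ∈ s ∧ ∀ b ∈ s, ¬ Γ.pref i b (Γ.bestOutcome i s) := by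
  have h := exists_not_pref i hs hne
  rw [bestOutcome, dif_pos h]
  exact h.choose_spec

lemma bestOutcome_mem (i : ι) {s : Set (Option V)} (hs : s ⊆ Γ.OutcomeSet) :
    Γ.bestOutcome i s ∈ Γ.OutcomeSet := by
  unfold bestOutcome
  split_ifs with h
  · exact hs h.choose_spec.1
  · exact Or.inl rfl

variable {H : V → V → Prop} (hH : WellFounded (Function.swap H)) {v w : V}

/-- The backward induction value of a position when only the moves in `H` are allowed. It is `∞`
at non-terminal positions without a move in `H`. -/
noncomputable def value (Γ : DGGame V ι) {H : V → V → Prop} (hH : WellFounded (Function.swap H)) :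
    V → Option V :=
  hH.fix fun v valueBelow =>
    if Γ.Terminal v then some v
    else Γ.bestOutcome (Γ.owner v) {o | ∃ w, ∃ h : H v w, valueBelow w h = o}

lemma value_eq_ite (v : V) :
    Γ.value hH v = if Γ.Terminal v then some v
      else Γ.bestOutcome (Γ.owner v) (Γ.value hH '' {w | H v w}) := by
  simp only [value, hH.fix_eq _ v, Set.image, Set.mem_ofPred_eq, exists_prop]

lemma value_of_terminal (hv : Γ.Terminal v) : Γ.value hH v = some v := by
  rw [value_eq_ite, if_pos hv]

lemma value_of_not_terminal (hv : ¬ Γ.Terminal v) :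
    Γ.value hH v = Γ.bestOutcome (Γ.owner v) (Γ.value hH '' {w | H v w}) := by
  rw [value_eq_ite, if_neg hv]

lemma value_mem (v : V) : Γ.value hH v ∈ Γ.OutcomeSet := by
  induction v using hH.induction with
  | _ v ih =>
    by_cases hv : Γ.Terminal v
    · exact Or.inr ⟨v, hv, value_of_terminal hH hv⟩
    · rw [value_of_not_terminal hH hv]
      exact bestOutcome_mem _ (Set.image_subset_iff.2 ih)

lemma value_congr {H' : V → V → Prop} (hH' : WellFounded (Function.swap H')) {S : Set V}
    (heq : ∀ v ∈ S, ∀ w, H v w ↔ H' v w) (hS : ∀ v ∈ S, ∀ w, H v w → w ∈ S) (hv : v ∈ S) :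
    Γ.value hH v = Γ.value hH' v := by
  induction v using hH.induction with
  | _ v ih =>
    have hset : {w | H v w} = {w | H' v w} := Set.ext (heq v hv)
    have himage : Γ.value hH '' {w | H v w} = Γ.value hH' '' {w | H v w} :=
      Set.image_congr fun w hw => ih w hw (hS v hv w hw)
    rw [value_eq_ite, value_eq_ite, himage, hset]

variable [Finite V] [∀ i, IsStrictOrder Γ.OutcomeSet (Γ.outcomePref i)]

lemma bestOutcome_image_value_spec (hw : H v w) (hv : ¬ Γ.Terminal v) :
    Γ.value hH v ∈ Γ.value hH '' {w | H v w} ∧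
      ∀ o ∈ Γ.value hH '' {w | H v w}, ¬ Γ.pref (Γ.owner v) o (Γ.value hH v) := by
  rw [value_of_not_terminal hH hv]
  refine bestOutcome_spec _ ?_ ⟨_, w, hw, rfl⟩
  rintro _ ⟨x, -, rfl⟩
  exact value_mem hH x

lemma not_pref_value (hw : H v w) (hv : ¬ Γ.Terminal v) :
    ¬ Γ.pref (Γ.owner v) (Γ.value hH w) (Γ.value hH v) :=
  (bestOutcome_image_value_spec hH hw hv).2 _ ⟨w, hw, rfl⟩

lemma exists_value_eq (hv : ¬ Γ.Terminal v) (h : ∃ w, H v w) :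
    ∃ w, H v w ∧ Γ.value hH w = Γ.value hH v := by
  obtain ⟨w, hw⟩ := h
  exact (bestOutcome_image_value_spec hH hw hv).1

end BackwardInduction

section Terminating

/-- A position from which every walk is finite. -/
def Terminating (Γ : DGGame V ι) (v : V) : Prop := Acc (Function.swap Γ.adj) v

/-- The moves from terminating positions, on which backward induction is possible. -/
def TerminatingMove (Γ : DGGame V ι) (v w : V) : Prop := Γ.adj v w ∧ Γ.Terminating v

lemma wellFounded_swap_terminatingMove (Γ : DGGame V ι) :
    WellFounded (Function.swap Γ.TerminatingMove) :=
  wellFounded_restrict_acc (Function.swap Γ.adj)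

/-- The backward induction value of a terminating position, with junk values at the other
positions. -/
noncomputable def terminatingValue (Γ : DGGame V ι) : V → Option V :=
  Γ.value Γ.wellFounded_swap_terminatingMove

/-- A leaver is a position whose owner prefers the value of some terminating successor to `∞`. -/
def Leaver (Γ : DGGame V ι) (v : V) : Prop :=
  ∃ w, Γ.adj v w ∧ Γ.Terminating w ∧ Γ.pref (Γ.owner v) (Γ.terminatingValue w) none

/-- All moves, except that leavers may only move to terminating positions. -/
def AdmissibleMove (Γ : DGGame V ι) (v w : V) : Prop :=
  Γ.adj v w ∧ (Γ.Leaver v → Γ.Terminating w)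

/-- A position from which every walk along admissible moves is finite. -/
def Settled (Γ : DGGame V ι) (v : V) : Prop := Acc (Function.swap Γ.AdmissibleMove) v

variable {v w : V}

lemma Terminal.terminating (h : Γ.Terminal v) : Γ.Terminating v :=
  ⟨v, fun w hw => absurd hw (h w)⟩

lemma Terminating.of_adj (h : Γ.Terminating v) (hw : Γ.adj v w) : Γ.Terminating w := h.inv hw

lemma Terminating.settled (h : Γ.Terminating v) : Γ.Settled v :=
  Subrelation.accessible And.left h

lemma Leaver.settled (h : Γ.Leaver v) : Γ.Settled v := ⟨v, fun _ hw => (hw.2 h).settled⟩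

lemma Settled.of_admissibleMove (h : Γ.Settled v) (hw : Γ.AdmissibleMove v w) : Γ.Settled w :=
  h.inv hw

lemma exists_adj_of_not_terminal (h : ¬ Γ.Terminal v) : ∃ w, Γ.adj v w := by
  simpa only [Terminal, not_forall, not_not] using h

lemma exists_adj_not_terminating (h : ¬ Γ.Terminating v) :
    ∃ w, Γ.adj v w ∧ ¬ Γ.Terminating w := by
  obtain ⟨w, hw, hvw⟩ := exists_not_acc_lt_of_not_acc h
  exact ⟨w, hvw, hw⟩

lemma exists_adj_not_settled (h : ¬ Γ.Settled v) : ∃ w, Γ.adj v w ∧ ¬ Γ.Settled w := by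
  obtain ⟨w, hw, hvw⟩ := exists_not_acc_lt_of_not_acc h
  exact ⟨w, hvw.1, hw⟩

lemma exists_admissibleMove (h : ¬ Γ.Terminal v) : ∃ w, Γ.AdmissibleMove v w := by
  by_cases hl : Γ.Leaver v
  · obtain ⟨w, hvw, hw, -⟩ := id hl
    exact ⟨w, hvw, fun _ => hw⟩
  · obtain ⟨w, hvw⟩ := exists_adj_of_not_terminal h
    exact ⟨w, hvw, fun h => absurd h hl⟩

end Terminating

section InfiniteEquilibrium

variable [Finite V] [∀ i, IsStrictOrder Γ.OutcomeSet (Γ.outcomePref i)]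

lemma exists_confining_move {v : V} (hv : ¬ Γ.Terminal v) :
    ∃ w, Γ.adj v w ∧ (¬ Γ.Settled v → ¬ Γ.Settled w) ∧
      (¬ Γ.Terminating v → ¬ Γ.Terminating w) ∧
      (Γ.Terminating v → Γ.terminatingValue w = Γ.terminatingValue v) := by
  by_cases hterm : Γ.Terminating v
  · obtain ⟨u, hu⟩ := exists_adj_of_not_terminal hv
    obtain ⟨w, hw, hval⟩ := exists_value_eq Γ.wellFounded_swap_terminatingMove hv ⟨u, hu, hterm⟩
    exact ⟨w, hw.1, fun h => absurd hterm.settled h, fun h => absurd hterm h, fun _ => hval⟩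
  · by_cases hsettled : Γ.Settled v
    · obtain ⟨w, hvw, hw⟩ := exists_adj_not_terminating hterm
      exact ⟨w, hvw, fun h => absurd hsettled h, fun _ => hw, fun h => absurd h hterm⟩
    · obtain ⟨w, hvw, hw⟩ := exists_adj_not_settled hsettled
      exact ⟨w, hvw, fun _ => hw, fun _ h => hw h.settled, fun h => absurd h hterm⟩

theorem exists_isNE_of_not_settled (howner : Set.InjOn Γ.owner {v | ¬ Γ.Terminal v})
    (hinit : ¬ Γ.Settled Γ.init) : ∃ σ, Γ.IsNE σ := by
  have : Nonempty V := ⟨Γ.init⟩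
  choose! σ hσ using fun v => exists_confining_move (Γ := Γ) (v := v)
  have houtcome : ∀ v, ¬ Γ.Terminating v → Γ.outcomeFrom σ v = none := fun v hv =>
    outcomeFrom_eq_none fun t ht hterminal =>
      play_subset (S := {v | ¬ Γ.Terminating v})
        (mapsTo_step fun x hx hxt => (hσ x hxt).2.2.1 hx) hv ht hterminal.terminating
  have hvalue : ∀ v, Γ.Terminating v → Γ.outcomeFrom σ v = Γ.terminatingValue v := fun v hv =>
    outcomeFrom_eq_of_wellFounded (S := {v | Γ.Terminating v}) Γ.wellFounded_swap_terminatingMove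
      (fun x _ hx => value_of_terminal _ hx)
      (fun x hx hxt => ⟨⟨(hσ x hxt).1, hx⟩, hx.of_adj (hσ x hxt).1, (hσ x hxt).2.2.2 hx⟩) hv
  have hinfinite : Γ.outcome σ = none := houtcome Γ.init fun h => hinit h.settled
  refine ⟨σ, isNE_of_forall_move (S := {v | ¬ Γ.Settled v}) howner (fun v hv => (hσ v hv).1) hinit
    (fun v hv hvt => (hσ v hvt).2.1 hv) fun v hv u hvu => ?_⟩
  rw [hinfinite]
  have hself : ¬ Γ.pref (Γ.owner v) none none := not_pref_self _ (Or.inl rfl)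
  refine ⟨?_, fun _ => hself⟩
  by_cases hu : Γ.Terminating u
  · rw [hvalue u hu]
    exact fun hp => hv (Leaver.settled ⟨u, hvu, hu, hp⟩)
  · rwa [houtcome u hu]

end InfiniteEquilibrium

section AcyclicCore

/-- An acyclic core: a set `D` of positions whose complement the players can choose not to leave,
with a well-founded set `H` of moves into `D` on which backward induction is possible at every
position of `D`. A move from `D` missing from `H` belongs to a position whose owner does not prefer
`∞` to the value, and it closes a cycle with moves of `H` if it stays in `D`. -/
structure IsAcyclicCore (Γ : DGGame V ι) (D : Set V) (H : V → V → Prop) : Prop where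
  wf : WellFounded (Function.swap H)
  adj_of_move : ∀ {v w}, H v w → Γ.adj v w
  mem_of_move : ∀ {v w}, H v w → w ∈ D
  exists_move : ∀ {v}, v ∈ D → ¬ Γ.Terminal v → ∃ w, H v w
  exists_adj_not_mem : ∀ {v}, v ∉ D → ∃ w, Γ.adj v w ∧ w ∉ D
  path_of_missing : ∀ {v u}, v ∈ D → u ∈ D → Γ.adj v u → ¬ H v u → Relation.ReflTransGen H u v
  not_pref_infinity : ∀ {v u}, v ∈ D → Γ.adj v u → ¬ H v u →
    ¬ Γ.pref (Γ.owner v) none (Γ.value wf v)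

/-- `CanReachValue Γ hH o v` says that some path along `H` leads from `v` to a position with
backward induction value `o`. -/
def CanReachValue (Γ : DGGame V ι) {H : V → V → Prop} (hH : WellFounded (Function.swap H))
    (o : Option V) (v : V) : Prop :=
  ∃ p, Relation.ReflTransGen H v p ∧ Γ.value hH p = o

/-- `IsRedirection Γ D hH o σ` says that the situation `σ` follows backward induction along `H` in
`D`, except that the positions that can reach the value `o` but do not have it are redirected
towards it. Outside `D` it never enters `D`. -/
structure IsRedirection (Γ : DGGame V ι) (D : Set V) {H : V → V → Prop}
    (hH : WellFounded (Function.swap H)) (o : Option V) (σ : V → V) : Prop where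
  isSituation : Γ.IsSituation σ
  not_mem : ∀ {v}, v ∉ D → σ v ∉ D
  move : ∀ {v}, v ∈ D → ¬ Γ.Terminal v → H v (σ v)
  canReachValue : ∀ {v}, v ∈ D → ¬ Γ.Terminal v → Γ.CanReachValue hH o v →
    Γ.CanReachValue hH o (σ v)
  value_eq : ∀ {v}, v ∈ D → ¬ Γ.Terminal v →
    (Γ.CanReachValue hH o v → Γ.value hH v = o) → Γ.value hH (σ v) = Γ.value hH v

variable {D : Set V} {H : V → V → Prop} {hH : WellFounded (Function.swap H)} {o : Option V}
  {σ : V → V} {v w u : V}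

lemma canReachValue_of_value_eq (h : Γ.value hH v = o) : Γ.CanReachValue hH o v := ⟨v, .refl, h⟩

lemma CanReachValue.of_path (h : Γ.CanReachValue hH o w) (hvw : Relation.ReflTransGen H v w) :
    Γ.CanReachValue hH o v := by
  obtain ⟨p, hp, hval⟩ := h
  exact ⟨p, hvw.trans hp, hval⟩

lemma CanReachValue.exists_move (h : Γ.CanReachValue hH o v) (hv : Γ.value hH v ≠ o) :
    ∃ w, H v w ∧ Γ.CanReachValue hH o w := by
  obtain ⟨p, hp, hval⟩ := h
  rcases hp.cases_head with rfl | ⟨w, hvw, hwp⟩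
  · exact absurd hval hv
  · exact ⟨w, hvw, p, hwp, hval⟩

namespace IsRedirection

lemma outcomeFrom_of_not_mem (hcore : Γ.IsAcyclicCore D H)
    (hσ : Γ.IsRedirection D hH o σ) (hv : v ∉ D) : Γ.outcomeFrom σ v = none := by
  have hplay : Γ.play σ v ⊆ Dᶜ := play_subset (mapsTo_step fun x hx _ => hσ.not_mem hx) hv
  refine outcomeFrom_eq_none fun t ht hterminal => ?_
  obtain ⟨w, htw, -⟩ := hcore.exists_adj_not_mem (hplay ht)
  exact hterminal w htw

lemma outcomeFrom_of_canReachValue (hcore : Γ.IsAcyclicCore D H)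
    (hσ : Γ.IsRedirection D hH o σ) (hv : v ∈ D) (hreach : Γ.CanReachValue hH o v) :
    Γ.outcomeFrom σ v = o := by
  refine outcomeFrom_eq_of_wellFounded (f := fun _ => o)
    (S := {x | x ∈ D ∧ Γ.CanReachValue hH o x}) hH ?_ ?_ ⟨hv, hreach⟩
  · rintro x ⟨-, hx⟩ hterminal
    have hval : Γ.value hH x = o := by
      by_contra hne
      obtain ⟨w, hxw, -⟩ := hx.exists_move hne
      exact hterminal w (hcore.adj_of_move hxw)
    rw [← hval, value_of_terminal hH hterminal]
  · rintro x ⟨hxD, hx⟩ ht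
    have hmove := hσ.move hxD ht
    exact ⟨hmove, ⟨hcore.mem_of_move hmove, hσ.canReachValue hxD ht hx⟩, rfl⟩

lemma outcomeFrom_of_not_canReachValue (hcore : Γ.IsAcyclicCore D H)
    (hσ : Γ.IsRedirection D hH o σ) (hv : v ∈ D) (hreach : ¬ Γ.CanReachValue hH o v) :
    Γ.outcomeFrom σ v = Γ.value hH v := by
  refine outcomeFrom_eq_of_wellFounded (S := {x | x ∈ D ∧ ¬ Γ.CanReachValue hH o x}) hH
    (fun x _ hx => value_of_terminal hH hx) ?_ ⟨hv, hreach⟩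
  rintro x ⟨hxD, hx⟩ ht
  have hmove := hσ.move hxD ht
  exact ⟨hmove, ⟨hcore.mem_of_move hmove, fun h => hx (h.of_path (.single hmove))⟩,
    hσ.value_eq hxD ht fun h => absurd h hx⟩

lemma path_of_mem_play (hcore : Γ.IsAcyclicCore D H) (hσ : Γ.IsRedirection D hH o σ)
    (hu : u ∈ D) (hv : v ∈ Γ.play σ u) : Relation.ReflTransGen H u v := by
  have hmaps : Set.MapsTo (Γ.step σ) {x | x ∈ D ∧ Relation.ReflTransGen H u x}
      {x | x ∈ D ∧ Relation.ReflTransGen H u x} := by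
    refine mapsTo_step ?_
    rintro x ⟨hxD, hux⟩ ht
    exact ⟨hcore.mem_of_move (hσ.move hxD ht), hux.tail (hσ.move hxD ht)⟩
  exact (play_subset hmaps ⟨hu, .refl⟩ hv).2

end IsRedirection

variable [Finite V] [∀ i, IsStrictOrder Γ.OutcomeSet (Γ.outcomePref i)]

namespace IsAcyclicCore

lemma exists_redirected_move (hcore : Γ.IsAcyclicCore D H) (o : Option V) (hv : v ∈ D)
    (ht : ¬ Γ.Terminal v) :
    ∃ w, H v w ∧ (Γ.CanReachValue hcore.wf o v → Γ.CanReachValue hcore.wf o w) ∧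
      ((Γ.CanReachValue hcore.wf o v → Γ.value hcore.wf v = o) →
        Γ.value hcore.wf w = Γ.value hcore.wf v) := by
  by_cases h : Γ.CanReachValue hcore.wf o v → Γ.value hcore.wf v = o
  · obtain ⟨w, hvw, hval⟩ := exists_value_eq hcore.wf ht (hcore.exists_move hv ht)
    exact ⟨w, hvw, fun hreach => canReachValue_of_value_eq (hval.trans (h hreach)), fun _ => hval⟩
  · obtain ⟨hreach, hne⟩ := Classical.not_imp.1 h
    obtain ⟨w, hvw, hw⟩ := hreach.exists_move hne
    exact ⟨w, hvw, fun _ => hw, fun h' => absurd h' h⟩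

lemma exists_isRedirection (hcore : Γ.IsAcyclicCore D H) (o : Option V) :
    ∃ σ, Γ.IsRedirection D hcore.wf o σ := by
  have hchoice : ∀ v, ∃ w, (v ∉ D → Γ.adj v w ∧ w ∉ D) ∧ (v ∈ D → ¬ Γ.Terminal v →
      H v w ∧ (Γ.CanReachValue hcore.wf o v → Γ.CanReachValue hcore.wf o w) ∧
        ((Γ.CanReachValue hcore.wf o v → Γ.value hcore.wf v = o) →
          Γ.value hcore.wf w = Γ.value hcore.wf v)) := by
    intro v
    by_cases hv : v ∈ D
    · by_cases ht : Γ.Terminal v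
      · exact ⟨v, fun h => absurd hv h, fun _ h => absurd ht h⟩
      · obtain ⟨w, hw⟩ := hcore.exists_redirected_move o hv ht
        exact ⟨w, fun h => absurd hv h, fun _ _ => hw⟩
    · obtain ⟨w, hw⟩ := hcore.exists_adj_not_mem hv
      exact ⟨w, fun _ => hw, fun h => absurd h hv⟩
  choose σ hout hin using hchoice
  refine ⟨σ, fun v ht => ?_, fun hv => (hout _ hv).2, fun hv ht => (hin _ hv ht).1,
    fun hv ht => (hin _ hv ht).2.1, fun hv ht => (hin _ hv ht).2.2⟩
  by_cases hv : v ∈ D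
  · exact hcore.adj_of_move (hin v hv ht).1
  · exact (hout v hv).1

end IsAcyclicCore

lemma IsRedirection.not_pref_deviation (hcore : Γ.IsAcyclicCore D H)
    (hσ : Γ.IsRedirection D hcore.wf (Γ.value hcore.wf v) σ) (hv : v ∈ D) (hvu : Γ.adj v u) :
    ¬ Γ.pref (Γ.owner v) (Γ.outcomeFrom σ u) (Γ.value hcore.wf v) ∧
      (v ∈ Γ.play σ u → ¬ Γ.pref (Γ.owner v) none (Γ.value hcore.wf v)) := by
  by_cases hu : u ∈ D
  · constructor
    · by_cases hreach : Γ.CanReachValue hcore.wf (Γ.value hcore.wf v) u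
      · rw [hσ.outcomeFrom_of_canReachValue hcore hu hreach]
        exact not_pref_self _ (value_mem hcore.wf v)
      · rw [hσ.outcomeFrom_of_not_canReachValue hcore hu hreach]
        have hmove : H v u := by
          by_contra hmissing
          exact hreach ⟨v, hcore.path_of_missing hv hu hvu hmissing, rfl⟩
        exact not_pref_value hcore.wf hmove fun ht => ht u hvu
    · intro hreturn
      have hpath := hσ.path_of_mem_play hcore hu hreturn
      refine hcore.not_pref_infinity hv hvu fun hmove => ?_
      have hcycle : Relation.TransGen H v v := .head' hmove hpath
      exact hcore.wf.transGen.irrefl.irrefl v (Relation.transGen_swap.2 hcycle)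
  · have hworse := hcore.not_pref_infinity hv hvu fun hmove => hu (hcore.mem_of_move hmove)
    rw [hσ.outcomeFrom_of_not_mem hcore hu]
    exact ⟨hworse, fun _ => hworse⟩

theorem IsAcyclicCore.exists_isNE (hcore : Γ.IsAcyclicCore D H)
    (howner : Set.InjOn Γ.owner {v | ¬ Γ.Terminal v}) (hinit : Γ.init ∈ D) :
    ∃ σ, Γ.IsNE σ := by
  obtain ⟨σ, hσ⟩ := hcore.exists_isRedirection (Γ.value hcore.wf Γ.init)
  have houtcome : Γ.outcome σ = Γ.value hcore.wf Γ.init :=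
    hσ.outcomeFrom_of_canReachValue hcore hinit (canReachValue_of_value_eq rfl)
  refine ⟨σ, isNE_of_forall_move
    (S := {v | v ∈ D ∧ Γ.value hcore.wf v = Γ.value hcore.wf Γ.init}) howner hσ.isSituation
    ⟨hinit, rfl⟩ ?_ ?_⟩
  · rintro v ⟨hv, hval⟩ ht
    exact ⟨hcore.mem_of_move (hσ.move hv ht), (hσ.value_eq hv ht fun _ => hval).trans hval⟩
  · rintro v ⟨hv, hval⟩ u hvu
    rw [← hval] at hσ houtcome
    rw [houtcome]
    exact hσ.not_pref_deviation hcore hv hvu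

end AcyclicCore

section SettledCore

variable [Finite V]

lemma exists_maximal_settled_moves (Γ : DGGame V ι) :
    ∃ H : V → V → Prop, WellFounded (Function.swap H) ∧
      (∀ v w, H v w → Γ.adj v w ∧ Γ.Settled w) ∧
      (∀ v w, Γ.Settled v → Γ.AdmissibleMove v w → H v w) ∧
      ∀ v u, Γ.Settled v → Γ.Settled u → Γ.adj v u → ¬ H v u → Relation.ReflTransGen H u v := by
  obtain ⟨r, hadm, hadj, hwf, hmax⟩ := exists_maximal_wellFounded
    (s := fun w v => Γ.AdmissibleMove v w ∧ Γ.Settled v)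
    (t := fun w v => Γ.adj v w ∧ Γ.Settled v ∧ Γ.Settled w)
    (fun w v h => ⟨h.1.1, h.2, h.2.of_admissibleMove h.1⟩)
    (wellFounded_restrict_acc (Function.swap Γ.AdmissibleMove))
  exact ⟨Function.swap r, hwf, fun v w h => ⟨(hadj w v h).1, (hadj w v h).2.2⟩,
    fun v w hv h => hadm w v ⟨h, hv⟩,
    fun v u hv hu hvu h => Relation.reflTransGen_swap.2 (hmax u v ⟨hvu, hv, hu⟩ h)⟩

variable [∀ i, IsStrictOrder Γ.OutcomeSet (Γ.outcomePref i)]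

lemma Leaver.not_pref_infinity {H : V → V → Prop} (hH : WellFounded (Function.swap H))
    (hadj : ∀ v w, H v w → Γ.adj v w)
    (hadm : ∀ v w, Γ.Settled v → Γ.AdmissibleMove v w → H v w) {v : V} (hv : Γ.Leaver v) :
    ¬ Γ.pref (Γ.owner v) none (Γ.value hH v) := by
  obtain ⟨w, hvw, hw, hpref⟩ := id hv
  have hagree : Γ.value hH w = Γ.terminatingValue w :=
    value_congr hH Γ.wellFounded_swap_terminatingMove (S := {x | Γ.Terminating x})
      (fun x hx y => ⟨fun h => ⟨hadj x y h, hx⟩,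
        fun h => hadm x y hx.settled ⟨h.1, fun _ => hx.of_adj h.1⟩⟩)
      (fun x hx y h => hx.of_adj (hadj x y h)) hw
  have hmove : H v w := hadm v w hv.settled ⟨hvw, fun _ => hw⟩
  intro hworse
  rw [← hagree] at hpref
  exact not_pref_value hH hmove (fun ht => ht w hvw)
    (pref_trans (value_mem hH w) (Or.inl rfl) (value_mem hH v) hpref hworse)

lemma exists_isAcyclicCore_settled :
    ∃ H, Γ.IsAcyclicCore {v | Γ.Settled v} H := by
  obtain ⟨H, hwf, hH, hadm, hmax⟩ := exists_maximal_settled_moves Γ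
  exact ⟨H, {
    wf := hwf
    adj_of_move := fun h => (hH _ _ h).1
    mem_of_move := fun h => (hH _ _ h).2
    exists_move := fun hv ht =>
      let ⟨w, hw⟩ := exists_admissibleMove ht
      ⟨w, hadm _ w hv hw⟩
    exists_adj_not_mem := exists_adj_not_settled
    path_of_missing := hmax _ _
    not_pref_infinity := fun {v u} hv hvu hmissing => by
      have hleaver : Γ.Leaver v := by
        by_contra hl
        exact hmissing (hadm v u hv ⟨hvu, fun h => absurd h hl⟩)
      exact hleaver.not_pref_infinity hwf (fun x y h => (hH x y h).1) hadm }⟩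

end SettledCore

end DGGame

theorem stmt2_general {V ι : Type*} [Finite V] (Γ : DGGame V ι)
    [∀ i, IsStrictOrder Γ.OutcomeSet (Γ.outcomePref i)]
    (howner : Set.InjOn Γ.owner {v | ¬ Γ.Terminal v}) :
    ∃ σ : V → V, Γ.IsNE σ := by
  by_cases hinit : Γ.Settled Γ.init
  · obtain ⟨H, hcore⟩ := DGGame.exists_isAcyclicCore_settled (Γ := Γ)
    exact hcore.exists_isNE howner hinit
  · exact DGGame.exists_isNE_of_not_settled howner hinit

/-- Every play-once DG game has a Nash equilibrium (in pure stationary strategies). -/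
theorem stmt2 {V ι : Type*} [Finite V] (Γ : DGGame V ι)
    (hinit : ¬ Γ.Terminal Γ.init) (hpref : Γ.PrefOrder)
    (hpo : Γ.PlayOnce) :
    ∃ σ : V → V, Γ.IsNE σ := by
  have := hpref.isStrictOrder_s2
  exact stmt2_general Γ hpo.injOn_owner
end
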